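/- arXiv:1504.02418 — 2 statements merged into one kernel-verified Lean document; each statement's English description precedes it below -/
import Mathlib

section
/- Let Γ be a nonempty family of walks on a finite weighted graph G=(V,E,σ). Then Mod_∞(Γ) = 1/ℓ(Γ), where ℓ(Γ) is the minimum number of edges traversed by any walk in Γ. -/
/-!
The constant density `ρ ≡ c` gives every walk `γ` the length `c · ℓ(γ)`, since the multiplicities
`N(γ, e)` sum to `ℓ(γ)`. With `c = 1/ℓ(Γ)` it is admissible and has energy at most `1/ℓ(Γ)`.
Conversely any density satisfies `ℓ_ρ(γ) ≤ ℰ_∞(ρ) · ℓ(γ)`; applying this to an admissible `ρ` and a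
walk `γ ∈ Γ` of minimum length yields `1 ≤ ℰ_∞(ρ) · ℓ(Γ)`.
-/

open scoped BigOperators

variable {V : Type*} [Fintype V] [DecidableEq V]

/-- The ρ-length of a walk: ℓ_ρ(γ) = Σ_{e∈E} N(γ,e) ρ(e), where N(γ,e) is the number
of times the walk γ traverses the edge e. -/
noncomputable def rhoLength (G : SimpleGraph V) [DecidableRel G.Adj]
    (ρ : G.edgeSet → ℝ) {u v : V} (w : G.Walk u v) : ℝ :=
  ∑ e : G.edgeSet, (w.edges.count ↑e : ℝ) * ρ e

/-- The admissible set A(Γ): densities that are nonnegative and give every walk of Γ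
ρ-length at least one. -/
def IsAdmissible (G : SimpleGraph V) [DecidableRel G.Adj]
    (Γ : Set (Σ (u : V) (v : V), G.Walk u v)) (ρ : G.edgeSet → ℝ) : Prop :=
  (∀ e, 0 ≤ ρ e) ∧ ∀ γ ∈ Γ, 1 ≤ rhoLength G ρ γ.2.2

/-- The p-energy ℰ_p(ρ) = Σ_{e∈E} σ(e) |ρ(e)|^p, for 1 ≤ p < ∞. -/
noncomputable def energy (G : SimpleGraph V) [DecidableRel G.Adj]
    (σ : G.edgeSet → ℝ) (p : ℝ) (ρ : G.edgeSet → ℝ) : ℝ :=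
  ∑ e : G.edgeSet, σ e * |ρ e| ^ p

/-- The ∞-energy ℰ_∞(ρ) = max_{e∈E} |ρ(e)|. -/
noncomputable def energyInf (G : SimpleGraph V) [DecidableRel G.Adj]
    (ρ : G.edgeSet → ℝ) : ℝ :=
  ⨆ e : G.edgeSet, |ρ e|

/-- The p-modulus Mod_p(Γ) = inf_{ρ ∈ A(Γ)} ℰ_p(ρ), for 1 ≤ p < ∞. -/
noncomputable def modulus (G : SimpleGraph V) [DecidableRel G.Adj]
    (σ : G.edgeSet → ℝ) (p : ℝ) (Γ : Set (Σ (u : V) (v : V), G.Walk u v)) : ℝ :=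
  sInf (energy G σ p '' {ρ | IsAdmissible G Γ ρ})

/-- The ∞-modulus Mod_∞(Γ) = inf_{ρ ∈ A(Γ)} ℰ_∞(ρ). -/
noncomputable def modulusInf (G : SimpleGraph V) [DecidableRel G.Adj]
    (Γ : Set (Σ (u : V) (v : V), G.Walk u v)) : ℝ :=
  sInf (energyInf G '' {ρ | IsAdmissible G Γ ρ})

/-- The connecting family Γ(s,t): all walks that start at s and end at t. -/
def connectingFamily (G : SimpleGraph V) (s t : V) :
    Set (Σ (u : V) (v : V), G.Walk u v) :=
  {γ | γ.1 = s ∧ γ.2.1 = t}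

/-- The minimum graph length ℓ(Γ) = inf_{γ ∈ Γ} ℓ(γ) (smallest number of hops). -/
noncomputable def minLength (G : SimpleGraph V)
    (Γ : Set (Σ (u : V) (v : V), G.Walk u v)) : ℕ :=
  sInf {n : ℕ | ∃ γ ∈ Γ, γ.2.2.length = n}

/-- |φ(x) - φ(y)|, the potential drop of φ : V → ℝ across an edge, as a function
on unordered pairs. -/
noncomputable def potDrop (φ : V → ℝ) : Sym2 V → ℝ :=
  Sym2.lift ⟨fun x y => |φ x - φ y|, fun x y => abs_sub_comm (φ x) (φ y)⟩

/-- The multiplicities `N(γ, e)` add up to the number of edges traversed. -/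
theorem sum_count_edges (G : SimpleGraph V) [DecidableRel G.Adj] {u v : V} (w : G.Walk u v) :
    ∑ e : G.edgeSet, (w.edges.count (e : Sym2 V) : ℝ) = w.length := by
  have h : ∑ e ∈ G.edgeFinset, w.edges.count e = w.edges.length := by
    have h' := Multiset.sum_count_eq_card (s := G.edgeFinset) (m := (w.edges : Multiset (Sym2 V)))
      (fun e he => SimpleGraph.mem_edgeFinset.2 (w.edges_subset_edgeSet he))
    simp only [Multiset.coe_count, Multiset.coe_card] at h'
    convert h'
  rw [SimpleGraph.Walk.length_edges] at h
  rw [← h, Nat.cast_sum]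
  exact (Finset.sum_subtype G.edgeFinset (fun e => SimpleGraph.mem_edgeFinset)
    (fun e : Sym2 V => (w.edges.count e : ℝ))).symm

theorem rhoLength_const (G : SimpleGraph V) [DecidableRel G.Adj] (c : ℝ) {u v : V}
    (w : G.Walk u v) : rhoLength G (fun _ => c) w = w.length * c := by
  rw [rhoLength, ← Finset.sum_mul, sum_count_edges]

theorem rhoLength_le_length_mul_energyInf (G : SimpleGraph V) [DecidableRel G.Adj]
    (ρ : G.edgeSet → ℝ) {u v : V} (w : G.Walk u v) :
    rhoLength G ρ w ≤ w.length * energyInf G ρ := by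
  rw [← sum_count_edges, Finset.sum_mul]
  refine Finset.sum_le_sum fun e _ => mul_le_mul_of_nonneg_left ?_ (Nat.cast_nonneg _)
  exact (le_abs_self _).trans (le_ciSup (f := fun e => |ρ e|) (Set.finite_range _).bddAbove e)

/-- For any nonempty family of walks Γ, Mod_∞(Γ) = 1/ℓ(Γ), where ℓ(Γ)
is the minimum number of edges traversed by any walk in Γ. -/
theorem modulusInf_eq_inv_minLength
    (G : SimpleGraph V) [DecidableRel G.Adj]
    (σ : G.edgeSet → ℝ) (hσ : ∀ e, 0 < σ e)
    (Γ : Set (Σ (u : V) (v : V), G.Walk u v))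
    (hne : Γ.Nonempty) (hΓ : ∀ γ ∈ Γ, 0 < γ.2.2.length) :
    modulusInf G Γ = 1 / (minLength G Γ : ℝ) := by
  obtain ⟨γ₀, hγ₀, hlen⟩ : ∃ γ ∈ Γ, γ.2.2.length = minLength G Γ :=
    Nat.sInf_mem (s := {n : ℕ | ∃ γ ∈ Γ, γ.2.2.length = n}) (by
      obtain ⟨γ, hγ⟩ := hne
      exact ⟨_, γ, hγ, rfl⟩)
  have hpos : (0 : ℝ) < minLength G Γ := by exact_mod_cast hlen ▸ hΓ γ₀ hγ₀
  have hlower : ∀ x ∈ energyInf G '' {ρ | IsAdmissible G Γ ρ}, 1 / (minLength G Γ : ℝ) ≤ x := by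
    rintro _ ⟨ρ, hρ, rfl⟩
    rw [div_le_iff₀' hpos, ← hlen]
    exact (hρ.2 γ₀ hγ₀).trans (rhoLength_le_length_mul_energyInf G ρ γ₀.2.2)
  have hadm : IsAdmissible G Γ fun _ => 1 / (minLength G Γ : ℝ) := by
    refine ⟨fun _ => by positivity, fun γ hγ => ?_⟩
    rw [rhoLength_const, mul_one_div, one_le_div hpos]
    exact_mod_cast Nat.sInf_le (s := {n : ℕ | ∃ γ ∈ Γ, γ.2.2.length = n}) ⟨γ, hγ, rfl⟩
  have hupper : energyInf G (fun _ => 1 / (minLength G Γ : ℝ)) ≤ 1 / (minLength G Γ : ℝ) :=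
    Real.iSup_le (fun _ => (abs_of_nonneg (by positivity)).le) (by positivity)
  exact le_antisymm ((csInf_le ⟨_, hlower⟩ ⟨_, hadm, rfl⟩).trans hupper)
    (le_csInf ⟨_, _, hadm, rfl⟩ hlower)
end

section
/- Let G=(V,E,σ) be a finite undirected weighted graph, let s,t ∈ V be distinct, let Γ = Γ(s,t) be the family of all walks from s to t, and let 1 < p < ∞. Let ρ* be the unique extremal density for Mod_p(Γ). Then there exists a vertex potential φ*:V→ℝ with φ*(s)=0, φ*(t)=1, and ρ*(x,y) = |φ*(x) − φ*(y)| for every edge (x,y) ∈ E. Moreover, φ* minimizes Σ_{(x,y)∈E} σ(x,y)|φ(x) − φ(y)|^p over all φ:V→ℝ with φ(s)=0 and φ(t)=1. -/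
/-!
The potential is the distance from `s` in the metric with edge lengths `ρstar`, truncated at `1`.
It vanishes at `s`, equals `1` at `t` by admissibility, and by the triangle inequality its drop
across an edge is at most `ρstar` there (`potDrop_truncDist_le`). Conversely the drops of any
potential with `φ s = 0`, `φ t = 1` telescope along walks, so they form an admissible density
(`isAdmissible_potDrop`) whose energy is at least the modulus. Since the energy is strictly
increasing in each edge value, minimality of `ρstar` forces `ρstar` to be the drop of the truncated
distance, and this potential then minimizes the `p`-energy. Truncation also takes care of vertices,
possibly including `t`, that no walk from `s` reaches: there the potential is `1`.
-/


open scoped BigOperators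

variable {V : Type*} [Fintype V] [DecidableEq V]

lemma potDrop_nonneg (φ : V → ℝ) (e : Sym2 V) : 0 ≤ potDrop φ e := by
  induction e using Sym2.ind with
  | _ x y => exact abs_nonneg (φ x - φ y)

lemma rhoLength_nil (G : SimpleGraph V) [DecidableRel G.Adj] (ρ : G.edgeSet → ℝ) (u : V) :
    rhoLength G ρ (SimpleGraph.Walk.nil : G.Walk u u) = 0 := by
  simp [rhoLength]

lemma rhoLength_cons (G : SimpleGraph V) [DecidableRel G.Adj] (ρ : G.edgeSet → ℝ) {u v w : V}
    (h : G.Adj u v) (q : G.Walk v w) :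
    rhoLength G ρ (SimpleGraph.Walk.cons h q) = ρ ⟨s(u, v), h⟩ + rhoLength G ρ q := by
  have key : ∀ e : G.edgeSet, ((SimpleGraph.Walk.cons h q).edges.count ↑e : ℝ) * ρ e
      = (if (⟨s(u, v), h⟩ : G.edgeSet) = e then ρ e else 0) + (q.edges.count ↑e : ℝ) * ρ e := by
    intro e
    rw [SimpleGraph.Walk.edges_cons, List.count_cons]
    by_cases he : (⟨s(u, v), h⟩ : G.edgeSet) = e
    · subst he
      simp only [beq_self_eq_true, if_true]
      push_cast
      ring
    · have he' : s(u, v) ≠ (e : Sym2 V) := fun h' => he (Subtype.ext h')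
      simp [he, he']
  unfold rhoLength
  rw [Finset.sum_congr rfl fun e _ => key e, Finset.sum_add_distrib]
  simp

lemma rhoLength_append (G : SimpleGraph V) [DecidableRel G.Adj] (ρ : G.edgeSet → ℝ) {u v w : V}
    (q : G.Walk u v) (r : G.Walk v w) :
    rhoLength G ρ (q.append r) = rhoLength G ρ q + rhoLength G ρ r := by
  simp only [rhoLength, SimpleGraph.Walk.edges_append, List.count_append, ← Finset.sum_add_distrib]
  refine Finset.sum_congr rfl fun e _ => ?_
  push_cast
  ring

lemma rhoLength_nonneg (G : SimpleGraph V) [DecidableRel G.Adj] (ρ : G.edgeSet → ℝ)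
    (hρ : ∀ e, 0 ≤ ρ e) {u v : V} (q : G.Walk u v) : 0 ≤ rhoLength G ρ q :=
  Finset.sum_nonneg fun e _ => mul_nonneg (Nat.cast_nonneg _) (hρ e)

lemma sub_le_rhoLength_potDrop (G : SimpleGraph V) [DecidableRel G.Adj] (φ : V → ℝ) {u v : V}
    (q : G.Walk u v) : φ v - φ u ≤ rhoLength G (fun e => potDrop φ ↑e) q := by
  induction q with
  | nil => simp [rhoLength_nil]
  | @cons a b c h q ih =>
    rw [rhoLength_cons]
    have h1 : φ b - φ a ≤ |φ a - φ b| := by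
      rw [abs_sub_comm]
      exact le_abs_self _
    have h2 : potDrop φ s(a, b) = |φ a - φ b| := rfl
    simp only [h2]
    linarith

lemma isAdmissible_potDrop (G : SimpleGraph V) [DecidableRel G.Adj] (φ : V → ℝ) {s t : V}
    (h0 : φ s = 0) (h1 : φ t = 1) :
    IsAdmissible G (connectingFamily G s t) (fun e => potDrop φ ↑e) := by
  refine ⟨fun e => potDrop_nonneg φ e, ?_⟩
  rintro ⟨u, v, q⟩ ⟨hu, hv⟩
  dsimp only at hu hv
  subst hu hv
  have := sub_le_rhoLength_potDrop G φ q
  dsimp only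
  linarith

lemma energy_potDrop (G : SimpleGraph V) [DecidableRel G.Adj] (σ : G.edgeSet → ℝ) (p : ℝ)
    (φ : V → ℝ) :
    energy G σ p (fun e => potDrop φ ↑e) = ∑ e : G.edgeSet, σ e * (potDrop φ ↑e) ^ p := by
  simp only [energy, abs_of_nonneg (potDrop_nonneg φ _)]

lemma modulus_le_energy (G : SimpleGraph V) [DecidableRel G.Adj] (σ : G.edgeSet → ℝ)
    (hσ : ∀ e, 0 < σ e) (p : ℝ) (Γ : Set (Σ (u : V) (v : V), G.Walk u v)) (ρ : G.edgeSet → ℝ)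
    (hρ : IsAdmissible G Γ ρ) : modulus G σ p Γ ≤ energy G σ p ρ := by
  refine csInf_le ⟨0, ?_⟩ ⟨ρ, hρ, rfl⟩
  rintro _ ⟨ρ', -, rfl⟩
  exact Finset.sum_nonneg fun e _ =>
    mul_nonneg (hσ e).le (Real.rpow_nonneg (abs_nonneg _) _)

/-- The distance from `s` to `v` for the edge lengths `ρ`, truncated at `1`. Inserting the value `1`
makes the infimum run over a nonempty set even when no walk joins `s` to `v`. -/
noncomputable def truncDist (G : SimpleGraph V) [DecidableRel G.Adj] (ρ : G.edgeSet → ℝ)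
    (s v : V) : ℝ :=
  sInf (insert 1 (Set.range fun q : G.Walk s v => rhoLength G ρ q))

lemma truncDist_bddBelow (G : SimpleGraph V) [DecidableRel G.Adj] (ρ : G.edgeSet → ℝ)
    (hρ : ∀ e, 0 ≤ ρ e) (s v : V) :
    0 ∈ lowerBounds (insert (1 : ℝ) (Set.range fun q : G.Walk s v => rhoLength G ρ q)) := by
  rintro _ (rfl | ⟨q, rfl⟩)
  · exact zero_le_one
  · exact rhoLength_nonneg G ρ hρ q

lemma truncDist_le_one (G : SimpleGraph V) [DecidableRel G.Adj] (ρ : G.edgeSet → ℝ)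
    (hρ : ∀ e, 0 ≤ ρ e) (s v : V) : truncDist G ρ s v ≤ 1 :=
  csInf_le ⟨0, truncDist_bddBelow G ρ hρ s v⟩ (Set.mem_insert _ _)

lemma truncDist_le_rhoLength (G : SimpleGraph V) [DecidableRel G.Adj] (ρ : G.edgeSet → ℝ)
    (hρ : ∀ e, 0 ≤ ρ e) {s v : V} (q : G.Walk s v) : truncDist G ρ s v ≤ rhoLength G ρ q :=
  csInf_le ⟨0, truncDist_bddBelow G ρ hρ s v⟩ (Set.mem_insert_of_mem _ ⟨q, rfl⟩)

lemma truncDist_self (G : SimpleGraph V) [DecidableRel G.Adj] (ρ : G.edgeSet → ℝ)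
    (hρ : ∀ e, 0 ≤ ρ e) (s : V) : truncDist G ρ s s = 0 := by
  refine le_antisymm ?_ (le_csInf ⟨1, Set.mem_insert _ _⟩ (truncDist_bddBelow G ρ hρ s s))
  simpa only [rhoLength_nil] using
    truncDist_le_rhoLength G ρ hρ (SimpleGraph.Walk.nil : G.Walk s s)

lemma truncDist_eq_one (G : SimpleGraph V) [DecidableRel G.Adj] (ρ : G.edgeSet → ℝ) {s t : V}
    (hadm : IsAdmissible G (connectingFamily G s t) ρ) : truncDist G ρ s t = 1 := by
  refine le_antisymm (truncDist_le_one G ρ hadm.1 s t) (le_csInf ⟨1, Set.mem_insert _ _⟩ ?_)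
  rintro _ (rfl | ⟨q, rfl⟩)
  · exact le_rfl
  · exact hadm.2 ⟨s, t, q⟩ ⟨rfl, rfl⟩

/-- One-sided triangle inequality: extending a walk by an edge adds the length of that edge. -/
lemma truncDist_le_add (G : SimpleGraph V) [DecidableRel G.Adj] (ρ : G.edgeSet → ℝ)
    (hρ : ∀ e, 0 ≤ ρ e) (s : V) {x y : V} (h : G.Adj x y) :
    truncDist G ρ s y ≤ truncDist G ρ s x + ρ ⟨s(x, y), h⟩ := by
  rw [← sub_le_iff_le_add]
  refine le_csInf ⟨1, Set.mem_insert _ _⟩ ?_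
  rintro _ (rfl | ⟨q, rfl⟩)
  · linarith [truncDist_le_one G ρ hρ s y, hρ ⟨s(x, y), h⟩]
  · have h1 := truncDist_le_rhoLength G ρ hρ
      (q.append (SimpleGraph.Walk.cons h SimpleGraph.Walk.nil))
    rw [rhoLength_append, rhoLength_cons, rhoLength_nil] at h1
    dsimp only
    linarith

lemma potDrop_truncDist_le (G : SimpleGraph V) [DecidableRel G.Adj] (ρ : G.edgeSet → ℝ)
    (hρ : ∀ e, 0 ≤ ρ e) (s : V) (e : G.edgeSet) : potDrop (truncDist G ρ s) ↑e ≤ ρ e := by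
  obtain ⟨e, he⟩ := e
  induction e using Sym2.ind with
  | _ x y =>
    have h : G.Adj x y := he
    have h1 := truncDist_le_add G ρ hρ s h
    have h2 := truncDist_le_add G ρ hρ s h.symm
    have h3 : (⟨s(y, x), h.symm⟩ : G.edgeSet) = ⟨s(x, y), he⟩ := Subtype.ext Sym2.eq_swap
    rw [h3] at h2
    change |truncDist G ρ s x - truncDist G ρ s y| ≤ _
    rw [abs_le]
    constructor <;> linarith

/-- The energy is strictly monotone on nonnegative densities, so a smaller density with no smaller
energy is the same density. -/
lemma eq_of_le_of_energy_le (G : SimpleGraph V) [DecidableRel G.Adj] (σ : G.edgeSet → ℝ)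
    (hσ : ∀ e, 0 < σ e) {p : ℝ} (hp : 0 < p) {ρ ρ' : G.edgeSet → ℝ} (h0 : ∀ e, 0 ≤ ρ' e)
    (hle : ∀ e, ρ' e ≤ ρ e) (hE : energy G σ p ρ ≤ energy G σ p ρ') (e : G.edgeSet) :
    ρ e = ρ' e := by
  by_contra hne
  have hlt : ρ' e < ρ e := lt_of_le_of_ne (hle e) (Ne.symm hne)
  refine absurd hE (not_le.mpr ?_)
  unfold energy
  refine Finset.sum_lt_sum (fun i _ => ?_) ⟨e, Finset.mem_univ _, ?_⟩
  · rw [abs_of_nonneg (h0 i), abs_of_nonneg ((h0 i).trans (hle i))]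
    exact mul_le_mul_of_nonneg_left (Real.rpow_le_rpow (h0 i) (hle i) hp.le) (hσ i).le
  · rw [abs_of_nonneg (h0 e), abs_of_nonneg ((h0 e).trans (hle e))]
    exact mul_lt_mul_of_pos_left (Real.rpow_lt_rpow (h0 e) hlt hp) (hσ e)

/-- For an undirected weighted graph, distinct s,t, 1 < p < ∞, and the
extremal density ρ* for Mod_p(Γ(s,t)), there is a vertex potential φ* with φ*(s)=0,
φ*(t)=1, and ρ*(x,y) = |φ*(x) - φ*(y)| on every edge; moreover φ* minimizes
Σ_{(x,y)∈E} σ(x,y)|φ(x)-φ(y)|^p among potentials with φ(s)=0, φ(t)=1. -/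
theorem extremal_density_eq_potential_drop
    (G : SimpleGraph V) [DecidableRel G.Adj]
    (σ : G.edgeSet → ℝ) (hσ : ∀ e, 0 < σ e)
    (s t : V) (hst : s ≠ t)
    (p : ℝ) (hp : 1 < p)
    (ρstar : G.edgeSet → ℝ)
    (hadm : IsAdmissible G (connectingFamily G s t) ρstar)
    (hext : energy G σ p ρstar = modulus G σ p (connectingFamily G s t)) :
    ∃ φstar : V → ℝ, φstar s = 0 ∧ φstar t = 1 ∧
      (∀ e : G.edgeSet, ρstar e = potDrop φstar ↑e) ∧
      (∀ φ : V → ℝ, φ s = 0 → φ t = 1 →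
        ∑ e : G.edgeSet, σ e * (potDrop φstar ↑e) ^ p
          ≤ ∑ e : G.edgeSet, σ e * (potDrop φ ↑e) ^ p) := by
  have h0 := truncDist_self G ρstar hadm.1 s
  have h1 := truncDist_eq_one G ρstar hadm
  have hmod : ∀ φ : V → ℝ, φ s = 0 → φ t = 1 →
      energy G σ p ρstar ≤ energy G σ p (fun e => potDrop φ ↑e) := fun φ hs ht =>
    hext.trans_le (modulus_le_energy G σ hσ p _ _ (isAdmissible_potDrop G φ hs ht))
  have heq : ∀ e : G.edgeSet, ρstar e = potDrop (truncDist G ρstar s) ↑e :=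
    eq_of_le_of_energy_le G σ hσ (by linarith) (fun e => potDrop_nonneg _ _)
      (potDrop_truncDist_le G ρstar hadm.1 s) (hmod _ h0 h1)
  refine ⟨truncDist G ρstar s, h0, h1, heq, fun φ hs ht => ?_⟩
  rw [← energy_potDrop, ← energy_potDrop, ← funext heq]
  exact hmod φ hs ht
end
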